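/- arXiv:2001.04676 — 5 statements merged into one kernel-verified Lean document; each statement's English description precedes it below -/
import Mathlib

section
/- Suppose the assumptions in the context hold with positive constants α, β, γ, c1, c2, c3 satisfying α ≥ min(β, γ)/2. Then there exists a constant c4 > 0, depending only on α, β, γ, c1, c2, c3, such that for every accuracy ε with 0 < ε < exp(−1) there exist a maximum level L ∈ ℕ and positive integers N_0, …, N_L for which the mean squared error of the multilevel Monte Carlo estimator, namely (s_L − f_∞)² + Σ_{ℓ=0}^{L} Var[Δf_ℓ]/N_ℓ, is at most ε², while the total cost Σ_{ℓ=0}^{L} C_ℓ · N_ℓ is at most c4·ε^{−2} if β > γ, at most c4·ε^{−2}·(log ε^{−1})² if β = γ, and at most c4·ε^{−2−(γ−β)/α} if β < γ. -/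
open MeasureTheory ProbabilityTheory Finset

/-!
The level `L` is chosen just large enough for a bias of at most `ε / 2`, so that `2 ^ (α * L)` has
order `ε⁻¹`. For a variance budget `τ`, minimising the cost by Lagrange multipliers makes `N ℓ`
proportional to `√(V ℓ / C ℓ)` and the cost equal to `(∑ √(V ℓ * C ℓ)) ^ 2 / τ`; passing to integers
adds at most one sample per level. Both `∑ √(V ℓ * C ℓ)` and `∑ C ℓ` are dominated by sums
`∑ 2 ^ (a * ℓ)`, whose size in terms of `ε` is decided by the sign of `a`, with `a = (γ - β) / 2`
for the first and `a = γ` for the second; `min β γ ≤ 2 * α` keeps the second within the claimed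
rate.
-/

section SampleAllocation

lemma sqrt_mul_mul_sqrt_div {v c : ℝ} (hv : 0 ≤ v) (hc : 0 < c) : √(v * c) * √(v / c) = v := by
  rw [← Real.sqrt_mul (by positivity), show v * c * (v / c) = v ^ 2 by field_simp,
    Real.sqrt_sq hv]

lemma mul_sqrt_div {v c : ℝ} (hc : 0 < c) : c * √(v / c) = √(v * c) := by
  rw [show v * c = c ^ 2 * (v / c) by field_simp, Real.sqrt_mul (by positivity),
    Real.sqrt_sq hc.le]

lemma exists_sampleSizes {ι : Type*} (s : Finset ι) {V C : ι → ℝ} (hV : ∀ i ∈ s, 0 ≤ V i)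
    (hC : ∀ i ∈ s, 0 < C i) {τ : ℝ} (hτ : 0 < τ) :
    ∃ N : ι → ℕ, (∀ i, 0 < N i) ∧ ∑ i ∈ s, V i / N i ≤ τ ∧
      ∑ i ∈ s, C i * N i ≤ (∑ i ∈ s, √(V i * C i)) ^ 2 / τ + ∑ i ∈ s, C i := by
  set S := ∑ i ∈ s, √(V i * C i) with hS
  have hS0 : 0 ≤ S := sum_nonneg fun _ _ => Real.sqrt_nonneg _
  refine ⟨fun i => ⌊S / τ * √(V i / C i)⌋₊ + 1, fun _ => Nat.succ_pos _, ?_, ?_⟩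
  · have variance_le : ∀ i ∈ s,
        V i / (⌊S / τ * √(V i / C i)⌋₊ + 1 : ℕ) ≤ τ * (√(V i * C i) / S) := by
      intro i hi
      rcases (hV i hi).eq_or_lt with hVi | hVi
      · rw [← hVi, zero_div]; positivity
      have hVC : 0 < √(V i * C i) := Real.sqrt_pos.2 (mul_pos hVi (hC i hi))
      have hSpos : 0 < S :=
        hVC.trans_le (single_le_sum (fun j _ => Real.sqrt_nonneg (V j * C j)) hi)
      rw [div_le_iff₀ (by positivity)]
      calc V i = τ * (√(V i * C i) / S) * (S / τ * √(V i / C i)) := by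
            conv_lhs => rw [← sqrt_mul_mul_sqrt_div hVi.le (hC i hi)]
            field_simp
        _ ≤ _ := by
            gcongr
            exact_mod_cast (Nat.lt_floor_add_one _).le
    calc _ ≤ ∑ i ∈ s, τ * (√(V i * C i) / S) := sum_le_sum variance_le
      _ = τ * (S / S) := by rw [← mul_sum, ← sum_div]
      _ ≤ τ := mul_le_of_le_one_right hτ.le (div_self_le_one S)
  · have cost_le : ∀ i ∈ s, C i * (⌊S / τ * √(V i / C i)⌋₊ + 1 : ℕ)
        ≤ S / τ * √(V i * C i) + C i := by
      intro i hi
      have hfloor : (⌊S / τ * √(V i / C i)⌋₊ : ℝ) ≤ S / τ * √(V i / C i) :=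
        Nat.floor_le (by positivity)
      rw [← mul_sqrt_div (hC i hi)]
      push_cast
      linarith [mul_le_mul_of_nonneg_left hfloor (hC i hi).le]
    calc _ ≤ ∑ i ∈ s, (S / τ * √(V i * C i) + C i) := sum_le_sum cost_le
      _ = S ^ 2 / τ + ∑ i ∈ s, C i := by
          rw [sum_add_distrib, ← mul_sum, ← hS]; ring

end SampleAllocation

section GeometricSums

lemma two_rpow_mul_natCast (a : ℝ) (n : ℕ) : (2 : ℝ) ^ (a * n) = ((2 : ℝ) ^ a) ^ n := by
  rw [Real.rpow_mul zero_le_two, Real.rpow_natCast]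

lemma geom_sum_succ_le_of_one_lt {F : Type*} [Field F] [LinearOrder F] [IsStrictOrderedRing F]
    {q : F} (hq : 1 < q) (n : ℕ) : ∑ i ∈ range (n + 1), q ^ i ≤ q / (q - 1) * q ^ n := by
  rw [geom_sum_eq hq.ne', div_mul_eq_mul_div, pow_succ']
  exact div_le_div_of_nonneg_right (sub_le_self _ zero_le_one) (sub_pos.2 hq).le

end GeometricSums

section Level

lemma exists_le_pow_le_mul {R : Type*} [Semiring R] [LinearOrder R] [IsStrictOrderedRing R]
    [Archimedean R] [ExistsAddOfLE R] {x y : R} (hx : 1 ≤ x) (hy : 1 < y) :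
    ∃ n : ℕ, x ≤ y ^ n ∧ y ^ n ≤ y * x := by
  obtain ⟨n, hn, hn'⟩ := exists_nat_pow_near hx hy
  exact ⟨n + 1, hn'.le, by rw [pow_succ']; gcongr⟩

lemma exists_level {α ε : ℝ} (c : ℝ) (hα : 0 < α) (hε : 0 < ε) (hε1 : ε ≤ 1) :
    ∃ L : ℕ, c * (2 : ℝ) ^ (-α * L) ≤ ε ∧ (2 : ℝ) ^ (α * L) ≤ 2 ^ α * max c 1 / ε := by
  have hx : 1 ≤ max c 1 / ε := (one_le_div hε).2 (hε1.trans (le_max_right _ _))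
  obtain ⟨L, hle, hge⟩ := exists_le_pow_le_mul hx (Real.one_lt_rpow one_lt_two hα)
  rw [← two_rpow_mul_natCast] at hle hge
  refine ⟨L, ?_, by rwa [mul_div_assoc]⟩
  rw [neg_mul, Real.rpow_neg zero_le_two, ← div_eq_mul_inv, div_le_iff₀ (by positivity)]
  rw [div_le_iff₀' hε] at hle
  exact (le_max_left _ _).trans hle

variable {α K ε : ℝ} {L : ℕ}

lemma two_rpow_mul_le_of_level (hα : 0 < α) (hK : 0 < K) (hε : 0 < ε)
    (hL : (2 : ℝ) ^ (α * L) ≤ K / ε) {a : ℝ} (ha : 0 ≤ a) :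
    (2 : ℝ) ^ (a * L) ≤ K ^ (a / α) * ε ^ (-(a / α)) := by
  calc (2 : ℝ) ^ (a * L) = ((2 : ℝ) ^ (α * L)) ^ (a / α) := by
        rw [← Real.rpow_mul zero_le_two]; congr 1; field_simp
    _ ≤ (K / ε) ^ (a / α) := by gcongr
    _ = K ^ (a / α) * ε ^ (-(a / α)) := by
        rw [Real.div_rpow hK.le hε.le, Real.rpow_neg hε.le, div_eq_mul_inv]

lemma le_one_of_le_exp_neg_one (hε1 : ε ≤ Real.exp (-1)) : ε ≤ 1 :=
  hε1.trans (Real.exp_le_one_iff.2 (by norm_num))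

lemma one_le_log_inv (hε : 0 < ε) (hε1 : ε ≤ Real.exp (-1)) : 1 ≤ Real.log ε⁻¹ := by
  rw [Real.log_inv]
  linarith [(Real.log_le_iff_le_exp hε).2 hε1]

lemma level_add_one_le_log (hα : 0 < α) (hK : 1 ≤ K) (hε : 0 < ε) (hε1 : ε ≤ Real.exp (-1))
    (hL : (2 : ℝ) ^ (α * L) ≤ K / ε) :
    (L : ℝ) + 1 ≤ ((Real.log K + 1) / (α * Real.log 2) + 1) * Real.log ε⁻¹ := by
  have hlog : 1 ≤ Real.log ε⁻¹ := one_le_log_inv hε hε1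
  have hlog2 : 0 < Real.log 2 := Real.log_pos one_lt_two
  have hlevel : L * (α * Real.log 2) ≤ Real.log K + Real.log ε⁻¹ := by
    have := Real.log_le_log (by positivity) hL
    rw [Real.log_rpow two_pos, div_eq_mul_inv, Real.log_mul (by positivity) (by positivity)] at this
    linarith
  have hL' : (L : ℝ) ≤ (Real.log K + 1) / (α * Real.log 2) * Real.log ε⁻¹ := by
    rw [div_mul_eq_mul_div, le_div_iff₀ (by positivity)]
    linarith [le_mul_of_one_le_right (Real.log_nonneg hK) hlog]
  linarith

end Level

section Rates

/-- The order of magnitude, as `ε → 0`, of the geometric sum `∑ ℓ ≤ L, 2 ^ (a * ℓ)` over the levels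
of a multilevel estimator whose finest level satisfies `2 ^ (α * L) ≈ ε⁻¹`. -/
noncomputable def levelSumRate (α a ε : ℝ) : ℝ :=
  if a < 0 then 1 else if a = 0 then Real.log ε⁻¹ else ε ^ (-(a / α))

/-- The complexity rate of multilevel Monte Carlo at accuracy `ε`, that is, its cost bound up to a
constant factor, for weak order `α`, variance decay `β` and cost growth `γ`. -/
noncomputable def mlmcRate (α β γ ε : ℝ) : ℝ :=
  if γ < β then ε ^ (-2 : ℝ)
  else if β = γ then ε ^ (-2 : ℝ) * Real.log ε⁻¹ ^ 2
  else ε ^ (-2 - (γ - β) / α)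

variable {α β γ ε : ℝ}

lemma mlmcRate_eq (hε : 0 < ε) :
    mlmcRate α β γ ε = ε ^ (-2 : ℝ) * levelSumRate α ((γ - β) / 2) ε ^ 2 := by
  unfold mlmcRate levelSumRate
  rcases lt_trichotomy γ β with h | rfl | h
  · rw [if_pos h, if_pos (by linarith), one_pow, mul_one]
  · simp
  · rw [if_neg h.not_gt, if_neg h.ne, if_neg (by linarith), if_neg (by linarith),
      ← Real.rpow_natCast, ← Real.rpow_mul hε.le, ← Real.rpow_add hε]
    congr 1
    push_cast
    ring

lemma one_le_levelSumRate (hα : 0 < α) (a : ℝ) (hε : 0 < ε) (hε1 : ε ≤ Real.exp (-1)) :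
    1 ≤ levelSumRate α a ε := by
  unfold levelSumRate
  split_ifs with hneg
  · exact le_rfl
  · exact one_le_log_inv hε hε1
  · exact Real.one_le_rpow_of_pos_of_le_one_of_nonpos hε
      (le_one_of_le_exp_neg_one hε1) (neg_nonpos.2 (div_nonneg (not_lt.1 hneg) hα.le))

lemma levelSumRate_le_rpow_neg_two (hα : 0 < α) {a : ℝ} (ha : a ≤ 2 * α) (hε : 0 < ε)
    (hε1 : ε ≤ 1) : levelSumRate α a ε ≤ ε ^ (-2 : ℝ) := by
  unfold levelSumRate
  split_ifs
  · exact Real.one_le_rpow_of_pos_of_le_one_of_nonpos hε hε1 (by norm_num)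
  · calc Real.log ε⁻¹ ≤ ε⁻¹ := Real.log_le_self (by positivity)
      _ = ε ^ (-1 : ℝ) := (Real.rpow_neg_one ε).symm
      _ ≤ ε ^ (-2 : ℝ) := Real.rpow_le_rpow_of_exponent_ge hε hε1 (by norm_num)
  · exact Real.rpow_le_rpow_of_exponent_ge hε hε1 (neg_le_neg ((div_le_iff₀ hα).2 ha))

lemma levelSumRate_le_mlmcRate (hα : 0 < α) (hαβγ : min β γ / 2 ≤ α) (hε : 0 < ε)
    (hε1 : ε ≤ Real.exp (-1)) : levelSumRate α γ ε ≤ mlmcRate α β γ ε := by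
  have hε_one : ε ≤ 1 := le_one_of_le_exp_neg_one hε1
  rcases le_or_gt γ (2 * α) with hγ | hγ
  · rw [mlmcRate_eq hε]
    exact (levelSumRate_le_rpow_neg_two hα hγ hε hε_one).trans
      (le_mul_of_one_le_right (by positivity) (one_le_pow₀ (one_le_levelSumRate hα _ hε hε1)))
  · have hβ : β ≤ 2 * α :=
      (min_le_iff.1 (show min β γ ≤ 2 * α by linarith)).resolve_right hγ.not_ge
    have hβγ : β < γ := hβ.trans_lt hγ
    have hγ0 : 0 < γ := by linarith
    rw [levelSumRate, if_neg hγ0.not_gt, if_neg hγ0.ne', mlmcRate, if_neg hβγ.not_gt,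
      if_neg hβγ.ne]
    apply Real.rpow_le_rpow_of_exponent_ge hε hε_one
    rw [sub_div]
    linarith [(div_le_iff₀ hα).2 hβ]

lemma exists_sum_two_rpow_le_levelSumRate {K : ℝ} (hα : 0 < α) (a : ℝ) (hK : 1 ≤ K) :
    ∃ A > (0 : ℝ), ∀ ε : ℝ, 0 < ε → ε ≤ Real.exp (-1) → ∀ L : ℕ, (2 : ℝ) ^ (α * L) ≤ K / ε →
      ∑ ℓ ∈ range (L + 1), (2 : ℝ) ^ (a * ℓ) ≤ A * levelSumRate α a ε := by
  unfold levelSumRate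
  rcases lt_trichotomy a 0 with ha | rfl | ha
  · have hq : (2 : ℝ) ^ a < 1 := Real.rpow_lt_one_of_one_lt_of_neg one_lt_two ha
    refine ⟨(1 - (2 : ℝ) ^ a)⁻¹, inv_pos.2 (sub_pos.2 hq), ?_⟩
    intro ε _ _ L _
    rw [if_pos ha, mul_one]
    simp only [two_rpow_mul_natCast]
    simpa using geom_sum_Ico_le_of_lt_one (m := 0) (n := L + 1) (by positivity) hq
  · have hlog2 : 0 < Real.log 2 := Real.log_pos one_lt_two
    have hlogK : 0 ≤ Real.log K := Real.log_nonneg hK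
    refine ⟨(Real.log K + 1) / (α * Real.log 2) + 1, by positivity, ?_⟩
    intro ε hε hε1 L hL
    simpa using level_add_one_le_log hα hK hε hε1 hL
  · have hK0 : 0 < K := by linarith
    have hq : 1 < (2 : ℝ) ^ a := Real.one_lt_rpow one_lt_two ha
    have hratio : 0 < (2 : ℝ) ^ a / (2 ^ a - 1) := div_pos (by positivity) (sub_pos.2 hq)
    refine ⟨2 ^ a / (2 ^ a - 1) * K ^ (a / α), by positivity, ?_⟩
    intro ε hε _ L hL
    rw [if_neg ha.not_gt, if_neg ha.ne', mul_assoc]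
    calc ∑ ℓ ∈ range (L + 1), (2 : ℝ) ^ (a * ℓ) ≤ 2 ^ a / (2 ^ a - 1) * 2 ^ (a * L) := by
          simpa only [two_rpow_mul_natCast] using geom_sum_succ_le_of_one_lt hq L
      _ ≤ 2 ^ a / (2 ^ a - 1) * (K ^ (a / α) * ε ^ (-(a / α))) :=
          mul_le_mul_of_nonneg_left (two_rpow_mul_le_of_level hα hK0 hε hL ha.le) hratio.le

end Rates

section Complexity

lemma sqrt_mul_le_two_rpow {β γ c2 c3 v c : ℝ} {ℓ : ℕ} (hc2 : 0 ≤ c2) (hc3 : 0 ≤ c3) (hc : 0 ≤ c)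
    (hvle : v ≤ c2 * (2 : ℝ) ^ (-β * ℓ)) (hcle : c ≤ c3 * (2 : ℝ) ^ (γ * ℓ)) :
    √(v * c) ≤ √(c2 * c3) * (2 : ℝ) ^ ((γ - β) / 2 * ℓ) := by
  have hprod : c2 * (2 : ℝ) ^ (-β * ℓ) * (c3 * (2 : ℝ) ^ (γ * ℓ))
      = c2 * c3 * ((2 : ℝ) ^ ((γ - β) / 2 * ℓ)) ^ 2 := by
    rw [← Real.rpow_natCast, ← Real.rpow_mul zero_le_two, mul_mul_mul_comm,
      ← Real.rpow_add two_pos]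
    congr 2
    push_cast
    ring
  calc √(v * c) ≤ √(c2 * (2 : ℝ) ^ (-β * ℓ) * (c3 * (2 : ℝ) ^ (γ * ℓ))) := by gcongr
    _ = √(c2 * c3) * (2 : ℝ) ^ ((γ - β) / 2 * ℓ) := by
        rw [hprod, Real.sqrt_mul (by positivity), Real.sqrt_sq (by positivity)]

lemma exists_allocationCost_le_mlmcRate {α β γ c2 c3 K : ℝ} (hα : 0 < α) (hc2 : 0 ≤ c2)
    (hc3 : 0 < c3) (hαβγ : min β γ / 2 ≤ α) (hK : 1 ≤ K) :
    ∃ c4 > (0 : ℝ), ∀ V C : ℕ → ℝ, (∀ ℓ, 0 < C ℓ) →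
      (∀ ℓ : ℕ, V ℓ ≤ c2 * (2 : ℝ) ^ (-β * ℓ)) → (∀ ℓ : ℕ, C ℓ ≤ c3 * (2 : ℝ) ^ (γ * ℓ)) →
      ∀ ε : ℝ, 0 < ε → ε ≤ Real.exp (-1) → ∀ L : ℕ, (2 : ℝ) ^ (α * L) ≤ K / ε →
        (∑ ℓ ∈ range (L + 1), √(V ℓ * C ℓ)) ^ 2 / (ε ^ 2 / 2) + ∑ ℓ ∈ range (L + 1), C ℓ
          ≤ c4 * mlmcRate α β γ ε := by
  obtain ⟨A, hA, hsum⟩ := exists_sum_two_rpow_le_levelSumRate hα ((γ - β) / 2) hK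
  obtain ⟨B, hB, hcost⟩ := exists_sum_two_rpow_le_levelSumRate hα γ hK
  refine ⟨2 * c2 * c3 * A ^ 2 + c3 * B, by positivity, ?_⟩
  intro V C hC hVle hCle ε hε hε1 L hL
  have sampling_le : (∑ ℓ ∈ range (L + 1), √(V ℓ * C ℓ)) ^ 2 / (ε ^ 2 / 2)
      ≤ 2 * c2 * c3 * A ^ 2 * mlmcRate α β γ ε := by
    have hroot : ∑ ℓ ∈ range (L + 1), √(V ℓ * C ℓ)
        ≤ √(c2 * c3) * (A * levelSumRate α ((γ - β) / 2) ε) := by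
      refine (sum_le_sum fun ℓ _ =>
        sqrt_mul_le_two_rpow hc2 hc3.le (hC ℓ).le (hVle ℓ) (hCle ℓ)).trans ?_
      rw [← mul_sum]
      gcongr
      exact hsum ε hε hε1 L hL
    calc _ ≤ (√(c2 * c3) * (A * levelSumRate α ((γ - β) / 2) ε)) ^ 2 / (ε ^ 2 / 2) := by gcongr
      _ = 2 * c2 * c3 * A ^ 2 * mlmcRate α β γ ε := by
          rw [mlmcRate_eq hε, mul_pow, Real.sq_sqrt (by positivity), Real.rpow_neg hε.le,
            Real.rpow_two]
          field_simp
  have rounding_le : ∑ ℓ ∈ range (L + 1), C ℓ ≤ c3 * B * mlmcRate α β γ ε := by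
    calc _ ≤ ∑ ℓ ∈ range (L + 1), c3 * (2 : ℝ) ^ (γ * ℓ) := sum_le_sum fun ℓ _ => hCle ℓ
      _ ≤ c3 * (B * levelSumRate α γ ε) := by
          rw [← mul_sum]
          gcongr
          exact hcost ε hε hε1 L hL
      _ ≤ c3 * (B * mlmcRate α β γ ε) := by
          gcongr
          exact levelSumRate_le_mlmcRate hα hαβγ hε hε1
      _ = c3 * B * mlmcRate α β γ ε := by ring
  linarith

theorem mlmc_complexity_general (α β γ c1 c2 c3 : ℝ) (hα : 0 < α) (hc2 : 0 ≤ c2) (hc3 : 0 < c3)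
    (hαβγ : min β γ / 2 ≤ α) :
    ∃ c4 > (0 : ℝ), ∀ bias V C : ℕ → ℝ, (∀ ℓ, 0 ≤ V ℓ) → (∀ ℓ, 0 < C ℓ) →
      (∀ ℓ : ℕ, |bias ℓ| ≤ c1 * (2 : ℝ) ^ (-α * ℓ)) →
      (∀ ℓ : ℕ, V ℓ ≤ c2 * (2 : ℝ) ^ (-β * ℓ)) →
      (∀ ℓ : ℕ, C ℓ ≤ c3 * (2 : ℝ) ^ (γ * ℓ)) →
      ∀ ε : ℝ, 0 < ε → ε ≤ Real.exp (-1) →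
        ∃ (L : ℕ) (N : ℕ → ℕ), (∀ ℓ ≤ L, 0 < N ℓ) ∧
          bias L ^ 2 + ∑ ℓ ∈ range (L + 1), V ℓ / N ℓ ≤ ε ^ 2 ∧
          ∑ ℓ ∈ range (L + 1), C ℓ * N ℓ ≤ c4 * mlmcRate α β γ ε := by
  have hK : 1 ≤ (2 : ℝ) ^ α * max (2 * c1) 1 :=
    one_le_mul_of_one_le_of_one_le (Real.one_le_rpow one_le_two hα.le) (le_max_right _ _)
  obtain ⟨c4, hc4, hcost⟩ := exists_allocationCost_le_mlmcRate hα hc2 hc3 hαβγ hK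
  refine ⟨c4, hc4, fun bias V C hV hC hbias hVle hCle ε hε hε1 => ?_⟩
  obtain ⟨L, hL, hL'⟩ := exists_level (2 * c1) hα hε (le_one_of_le_exp_neg_one hε1)
  obtain ⟨N, hN, hvar, hN_cost⟩ := exists_sampleSizes (range (L + 1)) (fun ℓ _ => hV ℓ)
    (fun ℓ _ => hC ℓ) (show 0 < ε ^ 2 / 2 by positivity)
  have hbias_sq : bias L ^ 2 ≤ (ε / 2) ^ 2 :=
    sq_le_sq.2 (by rw [abs_of_pos (half_pos hε)]; linarith [hbias L])
  exact ⟨L, N, fun ℓ _ => hN ℓ, by linarith [sq_nonneg ε],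
    hN_cost.trans (hcost V C hC hVle hCle ε hε hε1 L hL')⟩

end Complexity

/-- **The multilevel Monte Carlo complexity theorem** (Giles; Cliffe–Giles–Scheichl–Teckentrup).
Let `Δf ℓ` be square-integrable level-`ℓ` corrections on a probability space `(Ω, P)` with
deterministic costs `C ℓ > 0`, and let `flim` be the target value.  Write
`s L = ∑_{ℓ=0}^L E[Δf ℓ]`.  Assume, for positive constants `α, β, γ, c1, c2, c3` with
`α ≥ min(β,γ)/2`, the bias bound `|s ℓ − flim| ≤ c1·2^{−αℓ}`, the variance bound
`Var[Δf ℓ] ≤ c2·2^{−βℓ}` and the cost bound `C ℓ ≤ c3·2^{γℓ}`.  Then there is a constant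
`c4 > 0` (depending only on `α, β, γ, c1, c2, c3`) such that for every `0 < ε < exp (−1)`
there are a maximum level `L` and positive sample sizes `N 0, …, N L` for which the MLMC
mean squared error `(s L − flim)² + ∑_{ℓ≤L} Var[Δf ℓ]/N ℓ` is at most `ε²` while the total
cost `∑_{ℓ≤L} C ℓ · N ℓ` obeys the `β > γ` / `β = γ` / `β < γ` complexity bounds. -/
theorem mlmc_complexity
    (α β γ c1 c2 c3 : ℝ) (hα : 0 < α) (hβ : 0 < β) (hγ : 0 < γ)
    (hc1 : 0 < c1) (hc2 : 0 < c2) (hc3 : 0 < c3) (hαβγ : min β γ / 2 ≤ α) :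
    ∃ c4 > (0 : ℝ),
      ∀ {Ω : Type} [MeasurableSpace Ω] (P : Measure Ω), IsProbabilityMeasure P →
      ∀ (Δf : ℕ → Ω → ℝ), (∀ ℓ, MemLp (Δf ℓ) 2 P) →
      ∀ (C : ℕ → ℝ), (∀ ℓ, 0 < C ℓ) →
      ∀ flim : ℝ,
      (∀ ℓ : ℕ, |(∑ j ∈ range (ℓ + 1), ∫ ω, Δf j ω ∂P) - flim| ≤ c1 * (2 : ℝ) ^ (-α * ℓ)) →
      (∀ ℓ : ℕ, variance (Δf ℓ) P ≤ c2 * (2 : ℝ) ^ (-β * ℓ)) →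
      (∀ ℓ : ℕ, C ℓ ≤ c3 * (2 : ℝ) ^ (γ * ℓ)) →
      ∀ ε : ℝ, 0 < ε → ε < Real.exp (-1) →
        ∃ (L : ℕ) (N : ℕ → ℕ),
          (∀ ℓ ≤ L, 0 < N ℓ) ∧
          ((∑ j ∈ range (L + 1), ∫ ω, Δf j ω ∂P) - flim) ^ 2
              + ∑ ℓ ∈ range (L + 1), variance (Δf ℓ) P / (N ℓ : ℝ) ≤ ε ^ 2 ∧
          ∑ ℓ ∈ range (L + 1), C ℓ * (N ℓ : ℝ) ≤
            (if γ < β then c4 * ε ^ (-2 : ℝ)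
             else if β = γ then c4 * ε ^ (-2 : ℝ) * (Real.log ε⁻¹) ^ 2
             else c4 * ε ^ (-2 - (γ - β) / α)) := by
  obtain ⟨c4, hc4, general⟩ := mlmc_complexity_general α β γ c1 c2 c3 hα hc2.le hc3 hαβγ
  exact ⟨c4, hc4, fun P _ Δf _ C hC flim hbias hvar hcost ε hε hε1 => by
    simpa only [mlmcRate, mul_ite, ← mul_assoc] using
      general _ _ C (fun ℓ => variance_nonneg (Δf ℓ) P) hC hbias hvar hcost ε hε hε1.le⟩
end

section
/- Let W_1, W_2, … be i.i.d. positive random variables with mean μ = E[W_1] ∈ (0, ∞), and suppose there exists δ ∈ (0, 1) such that |W_1 − μ| ≤ δ·μ almost surely. Write Ȳ_k = (1/k) Σ_{i=1}^{k} W_i. Then there exists a constant C > 0 such that for all k ≥ 2, |E[log Ȳ_k] − E[log Ȳ_{k−1}]| ≤ C·k^{−2}; consequently there exists C' > 0 such that for all K ≥ 1, 0 ≤ log μ − E[log Ȳ_K] ≤ C'/K. -/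
open MeasureTheory ProbabilityTheory Finset

/-!
The sample mean moves by `Ȳ (n+1) - Ȳ n = (W n - Ȳ n) / (n+1)`, so to first order `log Ȳ` moves by
`(n+1)⁻¹ * (W n / Ȳ n - 1)`. As `W n` is independent of `Ȳ n`, the expectation of this is
`(n+1)⁻¹ * (μ * E[1 / Ȳ n] - 1)`, and the Jensen gap `μ * E[1 / Ȳ n] - 1` lies between `0` and
`Var[Ȳ n] / m² = O(1/n)`, where `m > 0` is a lower bound of the weights. The second-order error is
at most `(n+1)⁻² * E[(W n - Ȳ n)²] / m² = O(1/n²)`. The bias `log μ - E[log Ȳ n]` is itself at most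
the gap `μ * E[1 / Ȳ n] - 1`.
-/

section RealInequalities

variable {m t x y : ℝ}

lemma log_sub_log_le_sub_div (hx : 0 < x) (hy : 0 < y) :
    Real.log y - Real.log x ≤ (y - x) / x := by
  rw [← Real.log_div hy.ne' hx.ne', sub_div, div_self hx.ne']
  exact Real.log_le_sub_one_of_pos (div_pos hy hx)

lemma sub_div_left_le_sub_div_right_add_sq (hm : 0 < m) (hx : m ≤ x) (hy : m ≤ y) :
    (y - x) / x ≤ (y - x) / y + (y - x) ^ 2 / m ^ 2 := by
  have hx0 : 0 < x := hm.trans_le hx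
  have hy0 : 0 < y := hm.trans_le hy
  calc (y - x) / x = (y - x) / y + (y - x) ^ 2 / (x * y) := by field_simp; ring
    _ ≤ (y - x) / y + (y - x) ^ 2 / (m * m) := by gcongr
    _ = (y - x) / y + (y - x) ^ 2 / m ^ 2 := by rw [← sq]

lemma sub_div_sub_sq_le_log_sub_log (hm : 0 < m) (hx : m ≤ x) (hy : m ≤ y) :
    (y - x) / x - (y - x) ^ 2 / m ^ 2 ≤ Real.log y - Real.log x := by
  have hlog : (y - x) / y ≤ Real.log y - Real.log x := by
    have := log_sub_log_le_sub_div (hm.trans_le hy) (hm.trans_le hx)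
    rw [← neg_sub x y, neg_div]
    linarith
  linarith [sub_div_left_le_sub_div_right_add_sq hm hx hy]

lemma le_add_mul_sub (ht0 : 0 ≤ t) (ht1 : t ≤ 1) (hx : m ≤ x) (hy : m ≤ y) :
    m ≤ x + t * (y - x) := by
  simpa [AffineMap.lineMap_apply, add_comm] using
    (convex_Ici m).lineMap_mem hx hy ⟨ht0, ht1⟩

end RealInequalities

section JensenGaps

variable {Ω : Type*} [MeasurableSpace Ω] {P : Measure Ω} {X : Ω → ℝ} {m : ℝ}

lemma integrable_log_of_ae_le [IsFiniteMeasure P] (hX : Integrable X P) (hm : 0 < m)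
    (hmX : ∀ᵐ ω ∂P, m ≤ X ω) : Integrable (fun ω => Real.log (X ω)) P := by
  refine integrable_of_le_of_le (Real.measurable_log.comp_aemeasurable
    hX.aemeasurable).aestronglyMeasurable ?_ ?_ (integrable_const (Real.log m)) hX
  · filter_upwards [hmX] with ω h using Real.log_le_log hm h
  · filter_upwards [hmX] with ω h using Real.log_le_self (hm.le.trans h)

lemma integrable_inv_of_ae_le [IsFiniteMeasure P] (hX : AEMeasurable X P) (hm : 0 < m)
    (hmX : ∀ᵐ ω ∂P, m ≤ X ω) : Integrable (fun ω => (X ω)⁻¹) P := by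
  refine integrable_of_le_of_le hX.inv.aestronglyMeasurable ?_ ?_
    (integrable_const 0) (integrable_const m⁻¹)
  · filter_upwards [hmX] with ω h using inv_nonneg.2 (hm.le.trans h)
  · filter_upwards [hmX] with ω h using inv_anti₀ hm h

variable [IsProbabilityMeasure P]

lemma le_integral_of_ae_le (hX : Integrable X P) (hmX : ∀ᵐ ω ∂P, m ≤ X ω) : m ≤ P[X] := by
  simpa using integral_mono_ae (integrable_const m) hX hmX

lemma integral_log_le_log_integral (hX : Integrable X P) (hm : 0 < m)
    (hmX : ∀ᵐ ω ∂P, m ≤ X ω) : ∫ ω, Real.log (X ω) ∂P ≤ Real.log P[X] := by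
  have hIci : Set.Ici m ⊆ Set.Ioi 0 := Set.Ici_subset_Ioi.2 hm
  exact (strictConcaveOn_log_Ioi.concaveOn.subset hIci (convex_Ici m)).le_map_integral
    (Real.continuousOn_log.mono fun x hx => (hIci hx).ne') isClosed_Ici hmX hX
    (integrable_log_of_ae_le hX hm hmX)

lemma log_integral_sub_integral_log_le (hX : Integrable X P) (hm : 0 < m)
    (hmX : ∀ᵐ ω ∂P, m ≤ X ω) :
    Real.log P[X] - ∫ ω, Real.log (X ω) ∂P ≤ P[X] * ∫ ω, (X ω)⁻¹ ∂P - 1 := by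
  have hinv := integrable_inv_of_ae_le hX.aemeasurable hm hmX
  have hlog := integrable_log_of_ae_le hX hm hmX
  have hμ : 0 < P[X] := hm.trans_le (le_integral_of_ae_le hX hmX)
  calc Real.log P[X] - ∫ ω, Real.log (X ω) ∂P
      = ∫ ω, (Real.log P[X] - Real.log (X ω)) ∂P := by
        simp [integral_sub (integrable_const _) hlog]
    _ ≤ ∫ ω, (P[X] * (X ω)⁻¹ - 1) ∂P := by
        refine integral_mono_ae ((integrable_const _).sub hlog)
          ((hinv.const_mul _).sub (integrable_const 1)) ?_
        filter_upwards [hmX] with ω h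
        have hX0 : 0 < X ω := hm.trans_le h
        have := log_sub_log_le_sub_div hX0 hμ
        rwa [sub_div, div_self hX0.ne', div_eq_mul_inv] at this
    _ = P[X] * ∫ ω, (X ω)⁻¹ ∂P - 1 := by
        simp [integral_sub (hinv.const_mul _) (integrable_const _), integral_const_mul]

lemma integral_mul_integral_inv_sub_one_nonneg (hX : Integrable X P) (hm : 0 < m)
    (hmX : ∀ᵐ ω ∂P, m ≤ X ω) : 0 ≤ P[X] * ∫ ω, (X ω)⁻¹ ∂P - 1 :=
  (sub_nonneg.2 (integral_log_le_log_integral hX hm hmX)).trans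
    (log_integral_sub_integral_log_le hX hm hmX)

lemma integral_mul_integral_inv_sub_one_le_variance_div (hX : MemLp X 2 P) (hm : 0 < m)
    (hmX : ∀ᵐ ω ∂P, m ≤ X ω) : P[X] * ∫ ω, (X ω)⁻¹ ∂P - 1 ≤ Var[X; P] / m ^ 2 := by
  have hX1 : Integrable X P := hX.integrable one_le_two
  have hinv := integrable_inv_of_ae_le hX.aemeasurable hm hmX
  have hmμ : m ≤ P[X] := le_integral_of_ae_le hX1 hmX
  have hlin : Integrable (fun ω => (P[X] - X ω) / P[X]) P :=
    ((integrable_const _).sub hX1).div_const _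
  have hsq : Integrable (fun ω => (X ω - P[X]) ^ 2 / m ^ 2) P :=
    (hX.sub (memLp_const _)).integrable_sq.div_const _
  calc P[X] * ∫ ω, (X ω)⁻¹ ∂P - 1
      = ∫ ω, (P[X] * (X ω)⁻¹ - 1) ∂P := by
        simp [integral_sub (hinv.const_mul _) (integrable_const _), integral_const_mul]
    _ ≤ ∫ ω, ((P[X] - X ω) / P[X] + (X ω - P[X]) ^ 2 / m ^ 2) ∂P := by
        refine integral_mono_ae ((hinv.const_mul _).sub (integrable_const 1)) (hlin.add hsq) ?_
        filter_upwards [hmX] with ω h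
        have := sub_div_left_le_sub_div_right_add_sq hm h hmμ
        rwa [sub_div _ _ (X ω), div_self (hm.trans_le h).ne', div_eq_mul_inv, sub_sq_comm] at this
    _ = Var[X; P] / m ^ 2 := by
        rw [integral_add hlin hsq, integral_div, integral_div,
          integral_sub (integrable_const _) hX1, variance_eq_integral hX.aemeasurable]
        simp

end JensenGaps

section IndependentUpdate

variable {Ω : Type*} [MeasurableSpace Ω] {P : Measure Ω} {X Y : Ω → ℝ} {m t : ℝ}

lemma integral_sub_sq_of_indepFun [IsFiniteMeasure P] (hX : MemLp X 2 P)
    (hY : MemLp Y 2 P) (hXY : IndepFun X Y P) (hmean : P[Y] = P[X]) :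
    ∫ ω, (Y ω - X ω) ^ 2 ∂P = Var[X; P] + Var[Y; P] := by
  have hzero : ∫ ω, (Y ω - X ω) ∂P = 0 := by
    rw [integral_sub (hY.integrable one_le_two) (hX.integrable one_le_two), hmean, sub_self]
  calc ∫ ω, (Y ω - X ω) ^ 2 ∂P
      = Var[fun ω => Y ω - X ω; P] :=
        (variance_of_integral_eq_zero (hY.sub hX).aemeasurable hzero).symm
    _ = Var[X; P] + Var[Y; P] := by
        rw [variance_fun_sub hY hX, hXY.symm.covariance_eq_zero hY hX]
        ring

lemma integrable_inv_mul_of_indepFun [IsFiniteMeasure P] (hX : AEMeasurable X P)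
    (hY : Integrable Y P) (hXY : IndepFun X Y P) (hm : 0 < m) (hmX : ∀ᵐ ω ∂P, m ≤ X ω) :
    Integrable (fun ω => (X ω)⁻¹ * Y ω) P :=
  (hXY.comp measurable_inv measurable_id).integrable_mul (integrable_inv_of_ae_le hX hm hmX) hY

lemma integrable_log_add_mul_sub [IsFiniteMeasure P] (hX : Integrable X P) (hY : Integrable Y P)
    (hm : 0 < m) (hmX : ∀ᵐ ω ∂P, m ≤ X ω) (hmY : ∀ᵐ ω ∂P, m ≤ Y ω)
    (ht0 : 0 ≤ t) (ht1 : t ≤ 1) :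
    Integrable (fun ω => Real.log (X ω + t * (Y ω - X ω))) P := by
  refine integrable_log_of_ae_le (hX.add ((hY.sub hX).const_mul t)) hm ?_
  filter_upwards [hmX, hmY] with ω hx hy using le_add_mul_sub ht0 ht1 hx hy

variable [IsProbabilityMeasure P]

lemma integral_inv_mul_sub_one_of_indepFun (hX : AEMeasurable X P) (hY : Integrable Y P)
    (hXY : IndepFun X Y P) (hm : 0 < m) (hmX : ∀ᵐ ω ∂P, m ≤ X ω) :
    ∫ ω, ((X ω)⁻¹ * Y ω - 1) ∂P = P[Y] * ∫ ω, (X ω)⁻¹ ∂P - 1 := by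
  have hprod : ∫ ω, (X ω)⁻¹ * Y ω ∂P = (∫ ω, (X ω)⁻¹ ∂P) * P[Y] :=
    (hXY.comp measurable_inv measurable_id).integral_fun_mul_eq_mul_integral
      hX.inv.aestronglyMeasurable hY.aestronglyMeasurable
  rw [integral_sub (integrable_inv_mul_of_indepFun hX hY hXY hm hmX) (integrable_const _),
    hprod, mul_comm]
  simp

lemma integral_log_add_mul_sub_sub_integral_log_le (hX : Integrable X P) (hY : Integrable Y P)
    (hXY : IndepFun X Y P) (hm : 0 < m) (hmX : ∀ᵐ ω ∂P, m ≤ X ω) (hmY : ∀ᵐ ω ∂P, m ≤ Y ω)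
    (ht0 : 0 ≤ t) (ht1 : t ≤ 1) :
    ∫ ω, Real.log (X ω + t * (Y ω - X ω)) ∂P - ∫ ω, Real.log (X ω) ∂P
      ≤ t * (P[Y] * ∫ ω, (X ω)⁻¹ ∂P - 1) := by
  have hlogX := integrable_log_of_ae_le hX hm hmX
  have hlogZ := integrable_log_add_mul_sub hX hY hm hmX hmY ht0 ht1
  have hlin := (integrable_inv_mul_of_indepFun hX.aemeasurable hY hXY hm hmX).sub
    (integrable_const 1)
  rw [← integral_sub hlogZ hlogX, ← integral_inv_mul_sub_one_of_indepFun hX.aemeasurable hY hXY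
    hm hmX, ← integral_const_mul]
  refine integral_mono_ae (hlogZ.sub hlogX) (hlin.const_mul t) ?_
  filter_upwards [hmX, hmY] with ω hx hy
  have hX0 : 0 < X ω := hm.trans_le hx
  calc Real.log (X ω + t * (Y ω - X ω)) - Real.log (X ω)
      ≤ (X ω + t * (Y ω - X ω) - X ω) / X ω :=
        log_sub_log_le_sub_div hX0 (hm.trans_le (le_add_mul_sub ht0 ht1 hx hy))
    _ = t * ((X ω)⁻¹ * Y ω - 1) := by field_simp; ring

lemma le_integral_log_add_mul_sub_sub_integral_log (hX : MemLp X 2 P) (hY : MemLp Y 2 P)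
    (hXY : IndepFun X Y P) (hmean : P[Y] = P[X]) (hm : 0 < m) (hmX : ∀ᵐ ω ∂P, m ≤ X ω)
    (hmY : ∀ᵐ ω ∂P, m ≤ Y ω) (ht0 : 0 ≤ t) (ht1 : t ≤ 1) :
    t * (P[Y] * ∫ ω, (X ω)⁻¹ ∂P - 1) - t ^ 2 / m ^ 2 * (Var[X; P] + Var[Y; P])
      ≤ ∫ ω, Real.log (X ω + t * (Y ω - X ω)) ∂P - ∫ ω, Real.log (X ω) ∂P := by
  have hX1 : Integrable X P := hX.integrable one_le_two
  have hY1 : Integrable Y P := hY.integrable one_le_two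
  have hlogX := integrable_log_of_ae_le hX1 hm hmX
  have hlogZ := integrable_log_add_mul_sub hX1 hY1 hm hmX hmY ht0 ht1
  have hlin : Integrable (fun ω => t * ((X ω)⁻¹ * Y ω - 1)) P :=
    ((integrable_inv_mul_of_indepFun hX.aemeasurable hY1 hXY hm hmX).sub
      (integrable_const 1)).const_mul t
  have hsq : Integrable (fun ω => t ^ 2 / m ^ 2 * (Y ω - X ω) ^ 2) P :=
    (hY.sub hX).integrable_sq.const_mul _
  rw [← integral_sub hlogZ hlogX, ← integral_inv_mul_sub_one_of_indepFun hX.aemeasurable hY1 hXY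
    hm hmX, ← integral_const_mul, ← integral_sub_sq_of_indepFun hX hY hXY hmean,
    ← integral_const_mul, ← integral_sub hlin hsq]
  refine integral_mono_ae (hlin.sub hsq) (hlogZ.sub hlogX) ?_
  filter_upwards [hmX, hmY] with ω hx hy
  have hX0 : 0 < X ω := hm.trans_le hx
  calc t * ((X ω)⁻¹ * Y ω - 1) - t ^ 2 / m ^ 2 * (Y ω - X ω) ^ 2
      = (X ω + t * (Y ω - X ω) - X ω) / X ω - (X ω + t * (Y ω - X ω) - X ω) ^ 2 / m ^ 2 := by
        field_simp
        ring
    _ ≤ Real.log (X ω + t * (Y ω - X ω)) - Real.log (X ω) :=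
        sub_div_sub_sq_le_log_sub_log hm hx (le_add_mul_sub ht0 ht1 hx hy)

lemma abs_integral_log_add_mul_sub_sub_integral_log_le_max (hX : MemLp X 2 P) (hY : MemLp Y 2 P)
    (hXY : IndepFun X Y P) (hmean : P[Y] = P[X]) (hm : 0 < m) (hmX : ∀ᵐ ω ∂P, m ≤ X ω)
    (hmY : ∀ᵐ ω ∂P, m ≤ Y ω) (ht0 : 0 ≤ t) (ht1 : t ≤ 1) :
    |∫ ω, Real.log (X ω + t * (Y ω - X ω)) ∂P - ∫ ω, Real.log (X ω) ∂P|
      ≤ max (t ^ 2 / m ^ 2 * (Var[X; P] + Var[Y; P])) (t * (Var[X; P] / m ^ 2)) := by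
  have hX1 : Integrable X P := hX.integrable one_le_two
  have hY1 : Integrable Y P := hY.integrable one_le_two
  have hlower :=
    le_integral_log_add_mul_sub_sub_integral_log hX hY hXY hmean hm hmX hmY ht0 ht1
  have hupper := integral_log_add_mul_sub_sub_integral_log_le hX1 hY1 hXY hm hmX hmY ht0 ht1
  rw [hmean] at hlower hupper
  have hgap_nonneg := integral_mul_integral_inv_sub_one_nonneg hX1 hm hmX
  have hgap_le := integral_mul_integral_inv_sub_one_le_variance_div hX hm hmX
  refine abs_le'.2 ⟨le_max_of_le_right (hupper.trans (by gcongr)), le_max_of_le_left ?_⟩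
  linarith [mul_nonneg ht0 hgap_nonneg]

end IndependentUpdate

/-- The mean `Ȳ n` of the first `n` terms of a sequence of real random variables. The terms
are indexed from `0`, and `Ȳ 0 = 0` as a quotient by zero. -/
noncomputable def sampleMean {Ω : Type*} (W : ℕ → Ω → ℝ) (n : ℕ) (ω : Ω) : ℝ :=
  (∑ i ∈ range n, W i ω) / n

namespace sampleMean

variable {Ω : Type*} {W : ℕ → Ω → ℝ}

lemma succ_eq_add_mul_sub (n : ℕ) (ω : Ω) :
    sampleMean W (n + 1) ω =
      sampleMean W n ω + ((n : ℝ) + 1)⁻¹ * (W n ω - sampleMean W n ω) := by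
  rcases n.eq_zero_or_pos with rfl | hn
  · simp [sampleMean]
  · rw [sampleMean, sampleMean, sum_range_succ]
    push_cast
    field_simp
    ring

lemma eq_const_mul_sum (n : ℕ) :
    sampleMean W n = fun ω => (n : ℝ)⁻¹ * (∑ i ∈ range n, W i) ω := by
  funext ω
  rw [sampleMean, Finset.sum_apply, div_eq_inv_mul]

variable [MeasurableSpace Ω] {P : Measure Ω} {n : ℕ} {m μ V : ℝ}

lemma memLp {p : ENNReal} (hW : ∀ i, MemLp (W i) p P) (n : ℕ) : MemLp (sampleMean W n) p P := by
  rw [eq_const_mul_sum]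
  exact (memLp_finsetSum' _ fun i _ => hW i).const_mul _

lemma ae_le (hn : n ≠ 0) (hm : ∀ i, ∀ᵐ ω ∂P, m ≤ W i ω) : ∀ᵐ ω ∂P, m ≤ sampleMean W n ω := by
  filter_upwards [ae_all_iff.2 hm] with ω h
  rw [sampleMean, le_div_iff₀ (by positivity), mul_comm, ← nsmul_eq_mul]
  simpa using card_nsmul_le_sum (range n) (fun i => W i ω) m fun i _ => h i

lemma integral_eq (hn : n ≠ 0) (hW : ∀ i, Integrable (W i) P) (hmean : ∀ i, P[W i] = μ) :
    P[sampleMean W n] = μ := by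
  simp only [sampleMean]
  rw [integral_div, integral_finsetSum _ fun i _ => hW i]
  simp only [hmean, sum_const, card_range, nsmul_eq_mul]
  field_simp

lemma indepFun (hindep : iIndepFun W P) (hW : ∀ i, AEMeasurable (W i) P) (n : ℕ) :
    IndepFun (sampleMean W n) (W n) P := by
  rw [eq_const_mul_sum]
  exact (hindep.indepFun_sum_range_succ₀ hW n).comp (measurable_const_mul _) measurable_id

lemma variance_le (hW : ∀ i, MemLp (W i) 2 P)
    (hindep : Pairwise fun i j => IndepFun (W i) (W j) P) (hV : ∀ i, Var[W i; P] ≤ V) (n : ℕ) :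
    Var[sampleMean W n; P] ≤ V / n := by
  rw [eq_const_mul_sum, variance_const_mul,
    IndepFun.variance_sum (fun i _ => hW i) fun i _ j _ hij => hindep hij]
  calc (n : ℝ)⁻¹ ^ 2 * ∑ i ∈ range n, Var[W i; P]
      ≤ (n : ℝ)⁻¹ ^ 2 * (n * V) := by
        gcongr
        simpa using sum_le_card_nsmul (range n) (fun i => Var[W i; P]) V fun i _ => hV i
    _ = V / n := by
        rcases eq_or_ne (n : ℝ) 0 with h | h
        · simp [h]
        · field_simp

variable [IsProbabilityMeasure P]

lemma integral_log_le_log (hW : ∀ i, Integrable (W i) P) (hmean : ∀ i, P[W i] = μ)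
    (hm : 0 < m) (hmW : ∀ i, ∀ᵐ ω ∂P, m ≤ W i ω) (hn : n ≠ 0) :
    ∫ ω, Real.log (sampleMean W n ω) ∂P ≤ Real.log μ := by
  rw [← integral_eq hn hW hmean]
  exact integral_log_le_log_integral
    (memLp_one_iff_integrable.1 (memLp (fun i => memLp_one_iff_integrable.2 (hW i)) n))
    hm (ae_le hn hmW)

theorem log_sub_integral_log_le (hindep : Pairwise fun i j => IndepFun (W i) (W j) P)
    (hW : ∀ i, MemLp (W i) 2 P) (hmean : ∀ i, P[W i] = μ) (hV : ∀ i, Var[W i; P] ≤ V)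
    (hm : 0 < m) (hmW : ∀ i, ∀ᵐ ω ∂P, m ≤ W i ω) (hn : n ≠ 0) :
    Real.log μ - ∫ ω, Real.log (sampleMean W n ω) ∂P ≤ V / m ^ 2 / n := by
  have hmY := ae_le hn hmW
  have hY : MemLp (sampleMean W n) 2 P := memLp hW n
  rw [← integral_eq hn (fun i => (hW i).integrable one_le_two) hmean]
  calc Real.log P[sampleMean W n] - ∫ ω, Real.log (sampleMean W n ω) ∂P
      ≤ P[sampleMean W n] * ∫ ω, (sampleMean W n ω)⁻¹ ∂P - 1 :=
        log_integral_sub_integral_log_le (hY.integrable one_le_two) hm hmY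
    _ ≤ Var[sampleMean W n; P] / m ^ 2 :=
        integral_mul_integral_inv_sub_one_le_variance_div hY hm hmY
    _ ≤ V / n / m ^ 2 := by gcongr; exact variance_le hW hindep hV n
    _ = V / m ^ 2 / n := div_right_comm ..

theorem abs_integral_log_succ_sub_integral_log_le (hindep : iIndepFun W P)
    (hW : ∀ i, MemLp (W i) 2 P) (hmean : ∀ i, P[W i] = μ) (hV : ∀ i, Var[W i; P] ≤ V)
    (hm : 0 < m) (hmW : ∀ i, ∀ᵐ ω ∂P, m ≤ W i ω) (hn : n ≠ 0) :
    |∫ ω, Real.log (sampleMean W (n + 1) ω) ∂P - ∫ ω, Real.log (sampleMean W n ω) ∂P|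
      ≤ 2 * V / m ^ 2 * (((n : ℝ) + 1) ^ 2)⁻¹ := by
  have hn1 : (1 : ℝ) ≤ n := by exact_mod_cast Nat.one_le_iff_ne_zero.2 hn
  have hV0 : 0 ≤ V := (variance_nonneg _ _).trans (hV 0)
  have hVY : Var[sampleMean W n; P] ≤ V / n := variance_le hW (fun _ _ => hindep.indepFun) hV n
  have hmeans : P[W n] = P[sampleMean W n] := by
    rw [hmean, integral_eq hn (fun i => (hW i).integrable one_le_two) hmean]
  simp only [succ_eq_add_mul_sub]
  refine (abs_integral_log_add_mul_sub_sub_integral_log_le_max (memLp hW n) (hW n)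
    (indepFun hindep (fun i => (hW i).aemeasurable) n) hmeans hm (ae_le hn hmW) (hmW n)
    (by positivity) (inv_le_one_of_one_le₀ (by linarith))).trans (max_le ?_ ?_)
  · calc ((n : ℝ) + 1)⁻¹ ^ 2 / m ^ 2 * (Var[sampleMean W n; P] + Var[W n; P])
        ≤ ((n : ℝ) + 1)⁻¹ ^ 2 / m ^ 2 * (V + V) := by
          gcongr
          exacts [hVY.trans (div_le_self hV0 hn1), hV n]
      _ = 2 * V / m ^ 2 * (((n : ℝ) + 1) ^ 2)⁻¹ := by field_simp; ring
  · have hn_inv : V / n ≤ 2 * V / (n + 1) := by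
      rw [div_le_div_iff₀ (by linarith) (by linarith)]
      nlinarith
    calc ((n : ℝ) + 1)⁻¹ * (Var[sampleMean W n; P] / m ^ 2)
        ≤ ((n : ℝ) + 1)⁻¹ * (2 * V / (n + 1) / m ^ 2) := by
          gcongr
          exact hVY.trans hn_inv
      _ = 2 * V / m ^ 2 * (((n : ℝ) + 1) ^ 2)⁻¹ := by field_simp

end sampleMean

theorem log_sample_mean_increment_decay_general
    {Ω : Type*} [MeasurableSpace Ω] {P : Measure Ω} [IsProbabilityMeasure P]
    {W : ℕ → Ω → ℝ} {m μ V : ℝ} (hindep : iIndepFun W P) (hW : ∀ i, MemLp (W i) 2 P)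
    (hmean : ∀ i, P[W i] = μ) (hV : ∀ i, Var[W i; P] ≤ V)
    (hm : 0 < m) (hmW : ∀ i, ∀ᵐ ω ∂P, m ≤ W i ω) :
    (∀ k : ℕ, 2 ≤ k →
      |∫ ω, Real.log (sampleMean W k ω) ∂P - ∫ ω, Real.log (sampleMean W (k - 1) ω) ∂P|
        ≤ 2 * V / m ^ 2 * ((k : ℝ) ^ 2)⁻¹) ∧
    (∀ K : ℕ, 1 ≤ K →
      0 ≤ Real.log μ - ∫ ω, Real.log (sampleMean W K ω) ∂P ∧
      Real.log μ - ∫ ω, Real.log (sampleMean W K ω) ∂P ≤ V / m ^ 2 / K) := by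
  refine ⟨fun k hk => ?_, fun K hK => ?_⟩
  · obtain ⟨n, rfl⟩ : ∃ n, k = n + 1 := ⟨k - 1, by lia⟩
    simpa using sampleMean.abs_integral_log_succ_sub_integral_log_le hindep hW hmean hV hm hmW
      (n := n) (by lia)
  · have hK0 : K ≠ 0 := Nat.one_le_iff_ne_zero.1 hK
    exact ⟨sub_nonneg.2 (sampleMean.integral_log_le_log
      (fun i => (hW i).integrable one_le_two) hmean hm hmW hK0),
      sampleMean.log_sub_integral_log_le (fun _ _ => hindep.indepFun) hW hmean hV hm hmW hK0⟩

/-- **Decay of SUMO/MLMC increments for bounded weights.**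
Let `W 1, W 2, …` be i.i.d. positive importance weights with mean `μ ∈ (0,∞)` satisfying
`|W − μ| ≤ δ·μ` almost surely for some `δ ∈ (0,1)`, and let `Ȳ k` be the sample mean of
the first `k` weights.  Then the expected increments of the level-`k` estimators
`log Ȳ k` decay like `k⁻²`; consequently the bias of the level-`K` estimator satisfies
`0 ≤ log μ − E[log Ȳ K] ≤ C'/K`. -/
theorem log_sample_mean_increment_decay
    {Ω : Type*} [MeasurableSpace Ω] (P : Measure Ω) [IsProbabilityMeasure P]
    (W : ℕ → Ω → ℝ) (hmeas : ∀ i, Measurable (W i))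
    (hindep : iIndepFun W P)
    (hident : ∀ i, IdentDistrib (W i) (W 0) P P)
    (hpos : ∀ i, ∀ᵐ ω ∂P, 0 < W i ω)
    (hint : Integrable (W 0) P)
    (μ : ℝ) (hμ : μ = ∫ ω, W 0 ω ∂P) (hμ_pos : 0 < μ)
    (δ : ℝ) (hδ0 : 0 < δ) (hδ1 : δ < 1)
    (hbdd : ∀ i, ∀ᵐ ω ∂P, |W i ω - μ| ≤ δ * μ) :
    (∃ C > (0 : ℝ), ∀ k : ℕ, 2 ≤ k →
      |(∫ ω, Real.log ((∑ i ∈ range k, W i ω) / k) ∂P)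
          - ∫ ω, Real.log ((∑ i ∈ range (k - 1), W i ω) / (k - 1 : ℕ)) ∂P|
        ≤ C * ((k : ℝ) ^ 2)⁻¹) ∧
    (∃ C' > (0 : ℝ), ∀ K : ℕ, 1 ≤ K →
      0 ≤ Real.log μ - ∫ ω, Real.log ((∑ i ∈ range K, W i ω) / K) ∂P ∧
      Real.log μ - ∫ ω, Real.log ((∑ i ∈ range K, W i ω) / K) ∂P ≤ C' / K) := by
  have hm : 0 < μ - δ * μ := sub_pos.2 (mul_lt_of_lt_one_left hμ_pos hδ1)
  have hW : ∀ i, ∀ᵐ ω ∂P, W i ω ∈ Set.Icc (μ - δ * μ) (μ + δ * μ) := fun i =>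
    (hbdd i).mono fun ω h => Set.mem_Icc_iff_abs_le.1 (by rwa [abs_sub_comm])
  have hV : ∀ i, Var[W i; P] ≤ (δ * μ) ^ 2 := fun i =>
    (variance_le_sq_of_bounded (hW i) (hmeas i).aemeasurable).trans_eq (by ring)
  obtain ⟨hincrement, hbias⟩ := log_sample_mean_increment_decay_general hindep
    (fun i => memLp_of_bounded (hW i) (hmeas i).aestronglyMeasurable 2)
    (fun i => (hident i).integral_eq.trans hμ.symm)
    hV hm (fun i => (hW i).mono fun ω h => h.1)
  exact ⟨⟨_, by positivity, hincrement⟩, _, by positivity, hbias⟩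
end

section
/- For every real x > 0 and every r with 1 ≤ r ≤ 2, the inequality |log x − x + 1| ≤ |x − 1|^r · max(−log x, 1) holds. -/
/-!
For `x ≥ 1` everything follows from `1 - x⁻¹ ≤ log x`. For `0 < x ≤ 1` put `u = 1 - x`,
`L = -log x` and `q = √x * (1 + u)`. The inequality `t ≤ sinh t` at `t = -log √x` gives
`√x * L ≤ u`. If `q ≥ 1`, then `L ≤ q * L ≤ u + u ^ 2`; if `q ≤ 1`, then
`(1 - u ^ 2) * L = q * (√x * L) ≤ u`. In the first case `L - u ≤ u ^ 2`, in the second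
`L - u ≤ u ^ 2 * L`, whence the maximum of `L` and `1`.
-/

theorem min_rpow_le_rpow {a p q r : ℝ} (ha : 0 ≤ a) (hr : 0 ≤ r) (hpr : p ≤ r) (hrq : r ≤ q) :
    min (a ^ p) (a ^ q) ≤ a ^ r := by
  rcases le_total a 1 with ha1 | ha1
  · exact min_le_of_right_le (Real.rpow_le_rpow_of_exponent_ge' ha ha1 hr hrq)
  · exact min_le_of_left_le (Real.rpow_le_rpow_of_exponent_le ha1 hpr)

theorem sub_one_le_sqrt_mul_log {x : ℝ} (hx : 0 < x) (hx1 : x ≤ 1) :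
    x - 1 ≤ √x * Real.log x := by
  have hs : 0 < √x := Real.sqrt_pos.2 hx
  have hsinh : Real.sinh (Real.log √x) ≤ Real.log √x :=
    Real.sinh_le_self_iff.2 (Real.log_nonpos hs.le (Real.sqrt_le_one.2 hx1))
  calc x - 1 = √x * (2 * Real.sinh (Real.log √x)) := by
        rw [Real.sinh_log hs]
        field_simp
        rw [Real.sq_sqrt hx.le]
    _ ≤ √x * (2 * Real.log √x) := by gcongr
    _ = √x * Real.log x := by rw [Real.log_sqrt hx.le]; ring

theorem sub_one_sub_log_le_sq_mul_max {x : ℝ} (hx : 0 < x) (hx1 : x ≤ 1) :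
    x - 1 - Real.log x ≤ (x - 1) ^ 2 * max (-Real.log x) 1 := by
  have hL : 0 ≤ -Real.log x := neg_nonneg.2 (Real.log_nonpos hx.le hx1)
  have hsL : √x * -Real.log x ≤ 1 - x := by linarith [sub_one_le_sqrt_mul_log hx hx1]
  rcases le_total 1 (√x * (2 - x)) with hq | hq
  · have hlog : -Real.log x ≤ (2 - x) * (1 - x) :=
      calc -Real.log x ≤ √x * (2 - x) * -Real.log x := le_mul_of_one_le_left hL hq
        _ = (2 - x) * (√x * -Real.log x) := by ring
        _ ≤ (2 - x) * (1 - x) := by gcongr; linarith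
    calc x - 1 - Real.log x ≤ (x - 1) ^ 2 * 1 := by linarith
      _ ≤ (x - 1) ^ 2 * max (-Real.log x) 1 := by gcongr; exact le_max_right _ _
  · have hlog : (1 - (x - 1) ^ 2) * -Real.log x ≤ 1 - x :=
      calc (1 - (x - 1) ^ 2) * -Real.log x = √x ^ 2 * (2 - x) * -Real.log x := by
            rw [Real.sq_sqrt hx.le]; ring
        _ = √x * (2 - x) * (√x * -Real.log x) := by ring
        _ ≤ √x * -Real.log x := mul_le_of_le_one_left (by positivity) hq
        _ ≤ 1 - x := hsL
    calc x - 1 - Real.log x ≤ (x - 1) ^ 2 * -Real.log x := by linarith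
      _ ≤ (x - 1) ^ 2 * max (-Real.log x) 1 := by gcongr; exact le_max_left _ _

theorem sub_one_sub_log_le_sq {x : ℝ} (hx : 1 ≤ x) : x - 1 - Real.log x ≤ (x - 1) ^ 2 := by
  have hx0 : 0 < x := by linarith
  calc x - 1 - Real.log x ≤ x - 1 - (1 - x⁻¹) := by
        gcongr; exact Real.one_sub_inv_le_log_of_pos hx0
    _ = (x - 1) ^ 2 * x⁻¹ := by field_simp
    _ ≤ (x - 1) ^ 2 := mul_le_of_le_one_right (sq_nonneg _) (inv_le_one_of_one_le₀ hx)

theorem sub_one_sub_log_le_min_mul_max {x : ℝ} (hx : 0 < x) :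
    x - 1 - Real.log x ≤ min |x - 1| (|x - 1| ^ 2) * max (-Real.log x) 1 := by
  rcases le_total x 1 with hx1 | hx1
  · have habs : |x - 1| ≤ 1 := abs_le.2 ⟨by linarith, by linarith⟩
    rw [min_eq_right (pow_le_of_le_one (abs_nonneg _) habs two_ne_zero), sq_abs]
    exact sub_one_sub_log_le_sq_mul_max hx hx1
  · have hlog : 0 ≤ Real.log x := Real.log_nonneg hx1
    rw [max_eq_right (by linarith), mul_one, sq_abs, abs_of_nonneg (sub_nonneg.2 hx1)]
    exact le_min (sub_le_self _ hlog) (sub_one_sub_log_le_sq hx1)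

/-- **Elementary logarithmic inequality.**
For every real `x > 0` and every `r` with `1 ≤ r ≤ 2`, we have
`|log x − x + 1| ≤ |x − 1|^r · max (−log x) 1`, where the power is the real power. -/
theorem abs_log_sub_add_one_le_rpow_mul_max (x r : ℝ) (hx : 0 < x)
    (hr1 : 1 ≤ r) (hr2 : r ≤ 2) :
    |Real.log x - x + 1| ≤ |x - 1| ^ r * max (-Real.log x) 1 := by
  have hpow : min |x - 1| (|x - 1| ^ 2) ≤ |x - 1| ^ r := by
    simpa only [Real.rpow_one, Real.rpow_two] using
      min_rpow_le_rpow (abs_nonneg (x - 1)) (zero_le_one.trans hr1) hr1 hr2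
  calc |Real.log x - x + 1| = x - 1 - Real.log x := by
        rw [abs_of_nonpos (by linarith [Real.log_le_sub_one_of_pos hx])]; ring
    _ ≤ min |x - 1| (|x - 1| ^ 2) * max (-Real.log x) 1 := sub_one_sub_log_le_min_mul_max hx
    _ ≤ |x - 1| ^ r * max (-Real.log x) 1 := by gcongr
end

section
/- Let L ∈ ℝ and for each K ∈ ℕ₊ let L̂_{1,K} be a square-integrable real random variable with Var[L̂_{1,K}] ≤ V for a constant V > 0 and |E[L̂_{1,K}] − L| ≤ c1·K^{−α} for constants c1, α > 0. For M, K ∈ ℕ₊ let L̂_{M,K} be the average of M independent copies of L̂_{1,K}, so that its mean squared error for L equals Var[L̂_{1,K}]/M + (E[L̂_{1,K}] − L)². Then there exists a constant c3 > 0, depending only on V, c1 and α, such that for every ε ∈ (0, 1], choosing M = ⌈2V·ε^{−2}⌉ and K = ⌈(√2·c1/ε)^{1/α}⌉ yields E[(L̂_{M,K} − L)²] ≤ ε², with total computational cost M·K ≤ c3·ε^{−2−1/α}. -/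
open MeasureTheory ProbabilityTheory

/-!
The squared tolerance `ε ^ 2` is split evenly: `M` makes the variance term at most `ε ^ 2 / 2`, and
`K` makes the bias at most `ε / √2`. For `ε ≤ 1` both prescribed sample sizes have the form
`⌈a * ε ^ p⌉₊` with `p ≤ 0`, so rounding up adds at most `1 ≤ ε ^ p`, which the constant absorbs.
-/

section Ceil

variable {𝕜 : Type*} [Field 𝕜] [LinearOrder 𝕜] [IsStrictOrderedRing 𝕜] [FloorSemiring 𝕜]

-- When `V ≤ 0` the ceiling is `0`, and the left-hand side is the junk value `v / 0 = 0`.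
theorem div_ceil_div_le {v V δ : 𝕜} (hδ : 0 < δ) (hv : v ≤ V) : v / ⌈V / δ⌉₊ ≤ δ := by
  refine div_le_of_le_mul₀ (Nat.cast_nonneg _) hδ.le ?_
  calc v ≤ V := hv
    _ = δ * (V / δ) := (mul_div_cancel₀ V hδ.ne').symm
    _ ≤ δ * ⌈V / δ⌉₊ := by gcongr; exact Nat.le_ceil _

theorem ceil_mul_le_add_one_mul {a y : 𝕜} (ha : 0 ≤ a) (hy : 1 ≤ y) :
    (⌈a * y⌉₊ : 𝕜) ≤ (a + 1) * y :=
  calc (⌈a * y⌉₊ : 𝕜) ≤ a * y + 1 := (Nat.ceil_lt_add_one (by positivity)).le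
    _ ≤ a * y + y := by gcongr
    _ = (a + 1) * y := by ring

end Ceil

theorem mul_rpow_neg_le_of_div_rpow_le {c δ α x : ℝ} (hc : 0 ≤ c) (hδ : 0 < δ) (hα : 0 < α)
    (hx : (c / δ) ^ (1 / α) ≤ x) : c * x ^ (-α) ≤ δ := by
  have hx₀ : 0 ≤ x := (by positivity : 0 ≤ (c / δ) ^ (1 / α)).trans hx
  have hcx : c / δ ≤ x ^ α := by
    rwa [one_div, Real.rpow_inv_le_iff_of_pos (by positivity) hx₀ hα] at hx
  rw [Real.rpow_neg hx₀, ← div_eq_mul_inv]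
  exact div_le_of_le_mul₀ (by positivity) hδ.le ((div_le_iff₀' hδ).mp hcx)

theorem ceil_mul_rpow_mul_ceil_mul_rpow_le {a b ε p q : ℝ} (ha : 0 ≤ a) (hb : 0 ≤ b)
    (hε : 0 < ε) (hε₁ : ε ≤ 1) (hp : p ≤ 0) (hq : q ≤ 0) :
    (⌈a * ε ^ p⌉₊ : ℝ) * ⌈b * ε ^ q⌉₊ ≤ (a + 1) * (b + 1) * ε ^ (p + q) :=
  calc (⌈a * ε ^ p⌉₊ : ℝ) * ⌈b * ε ^ q⌉₊
      ≤ ((a + 1) * ε ^ p) * ((b + 1) * ε ^ q) := by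
        gcongr
        · exact ceil_mul_le_add_one_mul ha
            (Real.one_le_rpow_of_pos_of_le_one_of_nonpos hε hε₁ hp)
        · exact ceil_mul_le_add_one_mul hb
            (Real.one_le_rpow_of_pos_of_le_one_of_nonpos hε hε₁ hq)
    _ = (a + 1) * (b + 1) * ε ^ (p + q) := by rw [Real.rpow_add hε]; ring

/-- The mini-batch size `M` prescribed for variance bound `V` and root mean squared error `ε`. -/
noncomputable def batchSize (V ε : ℝ) : ℕ := ⌈2 * V * ε⁻¹ ^ 2⌉₊

/-- The number `K` of inner samples prescribed for bias bound `c * K ^ (-α)` and root mean squared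
error `ε`. -/
noncomputable def innerSampleSize (c α ε : ℝ) : ℕ := ⌈(√2 * c / ε) ^ (1 / α)⌉₊

section SampleSizes

variable {V c α ε : ℝ}

theorem innerSampleSize_pos (hc : 0 < c) (hε : 0 < ε) : 0 < innerSampleSize c α ε :=
  Nat.ceil_pos.mpr (by positivity)

theorem div_batchSize_le {v : ℝ} (hε : 0 < ε) (hv : v ≤ V) :
    v / batchSize V ε ≤ ε ^ 2 / 2 := by
  have hM : 2 * V * ε⁻¹ ^ 2 = V / (ε ^ 2 / 2) := by field_simp
  rw [batchSize, hM]
  exact div_ceil_div_le (by positivity) hv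

theorem mul_innerSampleSize_rpow_neg_le (hc : 0 ≤ c) (hε : 0 < ε) (hα : 0 < α) :
    c * (innerSampleSize c α ε : ℝ) ^ (-α) ≤ ε / √2 := by
  refine mul_rpow_neg_le_of_div_rpow_le hc (by positivity) hα ?_
  have hK : c / (ε / √2) = √2 * c / ε := by field_simp
  rw [hK]
  exact Nat.le_ceil _

theorem div_batchSize_add_sq_le {v b : ℝ} (hc : 0 ≤ c) (hε : 0 < ε) (hα : 0 < α) (hv : v ≤ V)
    (hb : |b| ≤ c * (innerSampleSize c α ε : ℝ) ^ (-α)) :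
    v / batchSize V ε + b ^ 2 ≤ ε ^ 2 := by
  have hb_abs : |b| ≤ ε / √2 := hb.trans (mul_innerSampleSize_rpow_neg_le hc hε hα)
  have hb_sq : b ^ 2 ≤ ε ^ 2 / 2 :=
    calc b ^ 2 = |b| ^ 2 := (sq_abs b).symm
      _ ≤ (ε / √2) ^ 2 := by gcongr
      _ = ε ^ 2 / 2 := by rw [div_pow, Real.sq_sqrt zero_le_two]
  linarith [div_batchSize_le hε hv]

theorem batchSize_mul_innerSampleSize_le (hV : 0 ≤ V) (hc : 0 ≤ c) (hα : 0 ≤ α) (hε : 0 < ε)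
    (hε₁ : ε ≤ 1) :
    (batchSize V ε : ℝ) * innerSampleSize c α ε ≤
      (2 * V + 1) * ((√2 * c) ^ (1 / α) + 1) * ε ^ (-2 - 1 / α) := by
  have hM : ε⁻¹ ^ 2 = ε ^ (-2 : ℝ) := by
    rw [Real.rpow_neg hε.le, Real.rpow_two, inv_pow]
  have hK : (√2 * c / ε) ^ (1 / α) = (√2 * c) ^ (1 / α) * ε ^ (-(1 / α)) := by
    rw [Real.div_rpow (by positivity) hε.le, Real.rpow_neg hε.le, div_eq_mul_inv]
  rw [batchSize, innerSampleSize, hM, hK, sub_eq_add_neg]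
  exact ceil_mul_rpow_mul_ceil_mul_rpow_le (by positivity) (by positivity) hε hε₁
    (by norm_num) (neg_nonpos.mpr (by positivity))

end SampleSizes

/-- **Complexity of the nested Monte Carlo estimator.**
Let `Y K` (for `K ≥ 1`) be the single-data-point nested Monte Carlo estimator of the model
evidence `L` using `K` inner samples: a square-integrable random variable with
`Var[Y K] ≤ V` and bias `|E[Y K] − L| ≤ c1·K^{−α}`.  Averaging `M` independent copies
gives mean squared error `Var[Y K]/M + (E[Y K] − L)²` at cost `M·K`.  Then there is a
constant `c3 > 0` depending only on `V, c1, α` such that for every `ε ∈ (0,1]`, the choices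
`M = ⌈2V·ε⁻²⌉` and `K = ⌈(√2·c1/ε)^{1/α}⌉` drive the mean squared error below `ε²` at
total cost `M·K ≤ c3·ε^{−2−1/α}`. -/
theorem nested_monte_carlo_complexity
    (V c1 α : ℝ) (hV : 0 < V) (hc1 : 0 < c1) (hα : 0 < α) :
    ∃ c3 > (0 : ℝ),
      ∀ {Ω : Type} [MeasurableSpace Ω] (P : Measure Ω), IsProbabilityMeasure P →
      ∀ (L : ℝ) (Y : ℕ → Ω → ℝ), (∀ K, 1 ≤ K → MemLp (Y K) 2 P) →
      (∀ K : ℕ, 1 ≤ K → variance (Y K) P ≤ V) →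
      (∀ K : ℕ, 1 ≤ K → |(∫ ω, Y K ω ∂P) - L| ≤ c1 * (K : ℝ) ^ (-α)) →
      ∀ ε : ℝ, 0 < ε → ε ≤ 1 →
        ∀ M K : ℕ, M = ⌈2 * V * ε⁻¹ ^ 2⌉₊ → K = ⌈(Real.sqrt 2 * c1 / ε) ^ (1 / α)⌉₊ →
          variance (Y K) P / (M : ℝ) + ((∫ ω, Y K ω ∂P) - L) ^ 2 ≤ ε ^ 2 ∧
          (M : ℝ) * (K : ℝ) ≤ c3 * ε ^ (-2 - 1 / α) := by
  refine ⟨(2 * V + 1) * ((√2 * c1) ^ (1 / α) + 1), by positivity, ?_⟩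
  rintro Ω _ P _ L Y _ hvar hbias ε hε hε1 _ _ rfl rfl
  have hK : 1 ≤ innerSampleSize c1 α ε := innerSampleSize_pos hc1 hε
  exact ⟨div_batchSize_add_sq_le hc1.le hε hα (hvar _ hK) (hbias _ hK),
    batchSize_mul_innerSampleSize_le hV.le hc1.le hα.le hε hε1⟩
end

section
/- Let (Δ_ℓ)_{ℓ≥0} be square-integrable real random variables with E[Δ_ℓ²] ≤ c2·2^{−βℓ} for constants c2 > 0 and β > 1, and suppose the series Σ_{ℓ=0}^{∞} E[Δ_ℓ] converges absolutely to a value 𝓛. Set ρ = 2^{−(β+1)/2} and ω_ℓ = (1 − ρ)·ρ^ℓ, so that ω_ℓ > 0 and Σ_ℓ ω_ℓ = 1. Let ℓ* be an ℕ-valued random variable with P(ℓ* = ℓ) = ω_ℓ, independent of the family (Δ_ℓ), and define the randomized MLMC estimator Z = Δ_{ℓ*}/ω_{ℓ*}. Then: (i) Z is integrable with E[Z] = 𝓛 (the estimator is unbiased); (ii) E[Z²] = Σ_{ℓ=0}^{∞} E[Δ_ℓ²]/ω_ℓ < ∞, so Z has finite variance; (iii) the expected computational cost E[2^{ℓ*}]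 = Σ_{ℓ=0}^{∞} ω_ℓ·2^ℓ is finite. -/
open MeasureTheory ProbabilityTheory

/-!
On the event `ℓ* = ℓ` the estimator is `Δ ℓ / w ℓ`, and independence makes the integral of
`Δ ℓ / w ℓ` over this event equal to `w ℓ * E[Δ ℓ / w ℓ] = E[Δ ℓ]`, so the weights cancel from the
mean. In the same way the event contributes `E[Δ ℓ ^ 2] / w ℓ` to the second moment and
`w ℓ * 2 ^ ℓ` to the cost. With `w ℓ` proportional to `ρ ^ ℓ`, the former is dominated by a
geometric series of ratio `2 ^ (-β) / ρ` and the latter is geometric of ratio `2 * ρ`, so both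
converge as soon as `2 ^ (-β) < ρ < 1 / 2`. Such `ρ` exist exactly when `β > 1`, and
`2 ^ (-(β + 1) / 2)` is the geometric mean of the two bounds. Being square-integrable, the estimator
is integrable.
-/

lemma iUnion_preimage_singleton {α β : Type*} (g : α → β) : ⋃ b, g ⁻¹' {b} = Set.univ := by
  rw [← Set.preimage_iUnion, Set.iUnion_of_singleton, Set.preimage_univ]

section RandomIndex

variable {Ω ι E : Type*} [MeasurableSpace Ω] {P : Measure Ω} [MeasurableSpace ι]
  [MeasurableSingletonClass ι] {N : Ω → ι}

lemma randomIndex_ae_eq_restrict_fiber (hN : Measurable N) (f : ι → Ω → E) (i : ι) :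
    (fun ω ↦ f (N ω) ω) =ᵐ[P.restrict (N ⁻¹' {i})] f i := by
  filter_upwards [ae_restrict_mem (hN (measurableSet_singleton i))] with ω hω
  rw [show N ω = i from hω]

lemma aestronglyMeasurable_randomIndex [Countable ι] [TopologicalSpace E]
    [TopologicalSpace.PseudoMetrizableSpace E] {f : ι → Ω → E} (hN : Measurable N)
    (hf : ∀ i, AEStronglyMeasurable (f i) P) :
    AEStronglyMeasurable (fun ω ↦ f (N ω) ω) P := by
  rw [← Measure.restrict_univ (μ := P), ← iUnion_preimage_singleton N]
  exact .iUnion fun i ↦ (hf i).restrict.congr (randomIndex_ae_eq_restrict_fiber hN f i).symm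

variable [NormedAddCommGroup E] [MeasurableSpace E] [BorelSpace E] {f : ι → Ω → E}

lemma setIntegral_fiber_randomIndex [NormedSpace ℝ E] (hN : Measurable N) {i : ι}
    (hf : AEStronglyMeasurable (f i) P) (hind : IndepFun N (f i) P) :
    ∫ ω in N ⁻¹' {i}, f (N ω) ω ∂P = P.real (N ⁻¹' {i}) • ∫ ω, f i ω ∂P := by
  rw [integral_congr_ae (randomIndex_ae_eq_restrict_fiber hN f i)]
  exact ((IndepFun_iff_Indep N (f i) P).1 hind).setIntegral_eq_smul hN.comap_le hf.aemeasurable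
    ⟨{i}, measurableSet_singleton i, rfl⟩ hf.aestronglyMeasurable_id_map

variable [Countable ι]

lemma integrable_randomIndex (hN : Measurable N) (hf : ∀ i, Integrable (f i) P)
    (hind : ∀ i, IndepFun N (f i) P)
    (hsum : Summable fun i ↦ P.real (N ⁻¹' {i}) * ∫ ω, ‖f i ω‖ ∂P) :
    Integrable (fun ω ↦ f (N ω) ω) P := by
  rw [← integrableOn_univ, ← iUnion_preimage_singleton N]
  refine integrableOn_iUnion_of_summable_integral_norm
    (fun i ↦ (hf i).restrict.congr (randomIndex_ae_eq_restrict_fiber hN f i).symm)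
    (hsum.congr fun i ↦ ?_)
  exact (setIntegral_fiber_randomIndex (f := fun i ω ↦ ‖f i ω‖) hN (hf i).norm.1
    ((hind i).comp measurable_id measurable_norm)).symm

lemma hasSum_integral_randomIndex [NormedSpace ℝ E] (hN : Measurable N)
    (hf : ∀ i, AEStronglyMeasurable (f i) P) (hind : ∀ i, IndepFun N (f i) P)
    (hint : Integrable (fun ω ↦ f (N ω) ω) P) :
    HasSum (fun i ↦ P.real (N ⁻¹' {i}) • ∫ ω, f i ω ∂P) (∫ ω, f (N ω) ω ∂P) := by
  have hfibers := hasSum_integral_iUnion (fun i ↦ hN (measurableSet_singleton i))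
    (pairwise_disjoint_fiber N) hint.integrableOn
  rw [iUnion_preimage_singleton, Measure.restrict_univ] at hfibers
  simpa only [setIntegral_fiber_randomIndex hN (hf _) (hind _)] using hfibers

variable [IsProbabilityMeasure P] {g : ι → E}

lemma integrable_comp_of_summable (hN : Measurable N)
    (hsum : Summable fun i ↦ P.real (N ⁻¹' {i}) * ‖g i‖) :
    Integrable (fun ω ↦ g (N ω)) P :=
  integrable_randomIndex (f := fun i _ ↦ g i) hN (fun _ ↦ integrable_const _)
    (fun _ ↦ indepFun_const_right _ _) (by simpa using hsum)

lemma hasSum_integral_comp [NormedSpace ℝ E] [CompleteSpace E] (hN : Measurable N)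
    (hint : Integrable (fun ω ↦ g (N ω)) P) :
    HasSum (fun i ↦ P.real (N ⁻¹' {i}) • g i) (∫ ω, g (N ω) ∂P) := by
  simpa using hasSum_integral_randomIndex (f := fun i _ ↦ g i) hN
    (fun _ ↦ aestronglyMeasurable_const) (fun _ ↦ indepFun_const_right _ _) hint

end RandomIndex

lemma mul_integral_norm_inv_smul_sq {Ω E : Type*} [MeasurableSpace Ω] {P : Measure Ω}
    [NormedAddCommGroup E] [NormedSpace ℝ E] (c : ℝ) (X : Ω → E) :
    c * ∫ ω, ‖c⁻¹ • X ω‖ ^ 2 ∂P = (∫ ω, ‖X ω‖ ^ 2 ∂P) / c := by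
  simp only [norm_smul, mul_pow, integral_const_mul, norm_inv, Real.norm_eq_abs, inv_pow, sq_abs]
  field_simp

/-- The single-term estimator of Rhee and Glynn: the correction `Δ i` at a random index `i = N ω`,
reweighted by `1 / w i`. It has mean `∑ i, E[Δ i]` when `N` is independent of the corrections and
has law `w`. -/
noncomputable def singleTermEstimator {Ω ι E : Type*} [SMul ℝ E] (w : ι → ℝ) (N : Ω → ι)
    (Δ : ι → Ω → E) (ω : Ω) : E :=
  (w (N ω))⁻¹ • Δ (N ω) ω

namespace singleTermEstimator

variable {Ω ι E : Type*} [MeasurableSpace Ω] {P : Measure Ω} [Countable ι] [MeasurableSpace ι]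
  [MeasurableSingletonClass ι] [NormedAddCommGroup E] [NormedSpace ℝ E] [MeasurableSpace E]
  [BorelSpace E] {w : ι → ℝ} {N : Ω → ι} {Δ : ι → Ω → E}

lemma hasSum_integral (hN : Measurable N) (hlaw : ∀ i, P.real (N ⁻¹' {i}) = w i)
    (hw : ∀ i, w i ≠ 0) (hΔ : ∀ i, AEStronglyMeasurable (Δ i) P)
    (hind : ∀ i, IndepFun N (Δ i) P) (hint : Integrable (singleTermEstimator w N Δ) P) :
    HasSum (fun i ↦ ∫ ω, Δ i ω ∂P) (∫ ω, singleTermEstimator w N Δ ω ∂P) := by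
  refine (hasSum_integral_randomIndex (f := fun i ω ↦ (w i)⁻¹ • Δ i ω) hN
    (fun i ↦ (hΔ i).const_smul _)
    (fun i ↦ (hind i).comp measurable_id (measurable_const_smul _)) hint).congr_fun ?_
  intro i
  rw [integral_smul, hlaw, smul_inv_smul₀ (hw i)]

lemma memLp_two (hN : Measurable N) (hlaw : ∀ i, P.real (N ⁻¹' {i}) = w i)
    (hΔ : ∀ i, MemLp (Δ i) 2 P) (hind : ∀ i, IndepFun N (Δ i) P)
    (hsum : Summable fun i ↦ (∫ ω, ‖Δ i ω‖ ^ 2 ∂P) / w i) :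
    MemLp (singleTermEstimator w N Δ) 2 P := by
  have hZ : AEStronglyMeasurable (singleTermEstimator w N Δ) P :=
    aestronglyMeasurable_randomIndex (f := fun i ω ↦ (w i)⁻¹ • Δ i ω) hN
      fun i ↦ (hΔ i).1.const_smul _
  refine (memLp_two_iff_integrable_sq_norm hZ).2 ?_
  refine integrable_randomIndex (f := fun i ω ↦ ‖(w i)⁻¹ • Δ i ω‖ ^ 2) hN
    (fun i ↦ ((hΔ i).const_smul _).norm.integrable_sq)
    (fun i ↦ (hind i).comp measurable_id ((measurable_const_smul _).norm.pow_const 2))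
    (hsum.congr fun i ↦ ?_)
  simp only [norm_pow, norm_norm, hlaw, mul_integral_norm_inv_smul_sq]

lemma hasSum_integral_norm_sq (hN : Measurable N) (hlaw : ∀ i, P.real (N ⁻¹' {i}) = w i)
    (hΔ : ∀ i, AEStronglyMeasurable (Δ i) P) (hind : ∀ i, IndepFun N (Δ i) P)
    (hZ : MemLp (singleTermEstimator w N Δ) 2 P) :
    HasSum (fun i ↦ (∫ ω, ‖Δ i ω‖ ^ 2 ∂P) / w i)
      (∫ ω, ‖singleTermEstimator w N Δ ω‖ ^ 2 ∂P) := by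
  refine (hasSum_integral_randomIndex (f := fun i ω ↦ ‖(w i)⁻¹ • Δ i ω‖ ^ 2) hN
    (fun i ↦ ((hΔ i).const_smul _).norm.pow 2)
    (fun i ↦ (hind i).comp measurable_id ((measurable_const_smul _).norm.pow_const 2))
    hZ.norm.integrable_sq).congr_fun ?_
  intro i
  rw [hlaw, smul_eq_mul, mul_integral_norm_inv_smul_sq]

end singleTermEstimator

lemma summable_div_pow_of_le_mul_pow {a : ℕ → ℝ} {c q ρ : ℝ} (ha : ∀ n, 0 ≤ a n)
    (hac : ∀ n, a n ≤ c * q ^ n) (hq : 0 ≤ q) (hqρ : q < ρ) : Summable fun n ↦ a n / ρ ^ n := by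
  have hρ : 0 < ρ := hq.trans_lt hqρ
  refine .of_nonneg_of_le (fun n ↦ div_nonneg (ha n) (by positivity)) (fun n ↦ ?_)
    ((summable_geometric_of_lt_one (by positivity) ((div_lt_one hρ).2 hqρ)).mul_left c)
  rw [div_pow, ← mul_div_assoc]
  gcongr
  exact hac n

lemma two_rpow_neg_add_one_div_two_mem_Ioo {β : ℝ} (hβ : 1 < β) :
    (2 : ℝ) ^ (-(β + 1) / 2) ∈ Set.Ioo ((2 : ℝ) ^ (-β)) (1 / 2) := by
  rw [one_div, ← Real.rpow_neg_one, Set.mem_Ioo, Real.rpow_lt_rpow_left_iff one_lt_two,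
    Real.rpow_lt_rpow_left_iff one_lt_two]
  constructor <;> linarith

theorem randomized_mlmc_unbiased_general
    {Ω E : Type*} [MeasurableSpace Ω] [NormedAddCommGroup E] [NormedSpace ℝ E] [CompleteSpace E]
    [MeasurableSpace E] [BorelSpace E] (P : Measure Ω) [IsProbabilityMeasure P]
    (Δ : ℕ → Ω → E) (hΔ : ∀ ℓ, MemLp (Δ ℓ) 2 P) (c2 β : ℝ)
    (hsq : ∀ ℓ : ℕ, ∫ ω, ‖Δ ℓ ω‖ ^ 2 ∂P ≤ c2 * (2 : ℝ) ^ (-β * ℓ))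
    (ρ : ℝ) (hρ : ρ ∈ Set.Ioo ((2 : ℝ) ^ (-β)) (1 / 2))
    (w : ℕ → ℝ) (hw : ∀ ℓ, w ℓ = (1 - ρ) * ρ ^ ℓ)
    (ℓstar : Ω → ℕ) (hℓmeas : Measurable ℓstar)
    (hℓlaw : ∀ ℓ : ℕ, P {ω | ℓstar ω = ℓ} = ENNReal.ofReal (w ℓ))
    (hindep : ∀ ℓ, IndepFun ℓstar (Δ ℓ) P) :
    (Integrable (singleTermEstimator w ℓstar Δ) P ∧
      HasSum (fun ℓ ↦ ∫ ω, Δ ℓ ω ∂P) (∫ ω, singleTermEstimator w ℓstar Δ ω ∂P)) ∧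
    (MemLp (singleTermEstimator w ℓstar Δ) 2 P ∧
      HasSum (fun ℓ ↦ (∫ ω, ‖Δ ℓ ω‖ ^ 2 ∂P) / w ℓ)
        (∫ ω, ‖singleTermEstimator w ℓstar Δ ω‖ ^ 2 ∂P)) ∧
    (Integrable (fun ω ↦ (2 : ℝ) ^ ℓstar ω) P ∧
      HasSum (fun ℓ ↦ w ℓ * 2 ^ ℓ) (∫ ω, (2 : ℝ) ^ ℓstar ω ∂P)) := by
  obtain ⟨hβρ, hρ_half⟩ := hρ
  have hρ0 : 0 < ρ := (by positivity : (0 : ℝ) < 2 ^ (-β)).trans hβρ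
  have hw0 (ℓ) : 0 < w ℓ := hw ℓ ▸ mul_pos (by linarith) (pow_pos hρ0 ℓ)
  have hlaw (ℓ) : P.real (ℓstar ⁻¹' {ℓ}) = w ℓ :=
    (congrArg ENNReal.toReal (hℓlaw ℓ)).trans (ENNReal.toReal_ofReal (hw0 ℓ).le)
  have hdecay (ℓ : ℕ) : ∫ ω, ‖Δ ℓ ω‖ ^ 2 ∂P ≤ c2 * ((2 : ℝ) ^ (-β)) ^ ℓ := by
    simpa only [Real.rpow_mul_natCast zero_le_two] using hsq ℓ
  have hsecond : Summable fun ℓ ↦ (∫ ω, ‖Δ ℓ ω‖ ^ 2 ∂P) / w ℓ := by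
    simp only [hw, mul_comm (1 - ρ), ← div_div]
    exact (summable_div_pow_of_le_mul_pow (fun ℓ ↦ by positivity) hdecay (by positivity)
      hβρ).div_const _
  have hcost : Summable fun ℓ ↦ w ℓ * 2 ^ ℓ := by
    simp only [hw, mul_assoc, ← mul_pow]
    exact (summable_geometric_of_lt_one (by positivity) (by linarith)).mul_left _
  have hΔm (ℓ) := (hΔ ℓ).aestronglyMeasurable
  have hL2 := singleTermEstimator.memLp_two hℓmeas hlaw hΔ hindep hsecond
  have hL1 := hL2.integrable one_le_two
  have hcost_int : Integrable (fun ω ↦ (2 : ℝ) ^ ℓstar ω) P :=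
    integrable_comp_of_summable hℓmeas (g := fun ℓ ↦ (2 : ℝ) ^ ℓ) (by simpa [hlaw] using hcost)
  refine ⟨⟨hL1, ?_⟩, ⟨hL2, ?_⟩, hcost_int, ?_⟩
  · exact singleTermEstimator.hasSum_integral hℓmeas hlaw (fun ℓ ↦ (hw0 ℓ).ne') hΔm hindep hL1
  · exact singleTermEstimator.hasSum_integral_norm_sq hℓmeas hlaw hΔm hindep hL2
  · simpa only [hlaw, smul_eq_mul] using
      hasSum_integral_comp hℓmeas (g := fun ℓ ↦ (2 : ℝ) ^ ℓ) hcost_int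

/-- **Unbiasedness, finite variance and finite expected cost of the randomized MLMC
estimator** (Rhee–Glynn randomization).  Let `Δ ℓ` be square-integrable MLMC corrections
with `E[Δ ℓ²] ≤ c2·2^{−βℓ}` for some `β > 1`, whose expectations sum absolutely to the
model evidence `𝓛`.  With `ρ = 2^{−(β+1)/2}` and weights `w ℓ = (1−ρ)·ρ^ℓ`, draw a random
level `ℓ*` with `P(ℓ* = ℓ) = w ℓ`, independent of the corrections, and set
`Z = Δ_{ℓ*}/w_{ℓ*}`. Then `Z` is integrable with `E[Z] = 𝓛`; its second moment equals
`∑_ℓ E[Δ ℓ²]/w ℓ`, a convergent series; and the expected cost `E[2^{ℓ*}] = ∑_ℓ w ℓ·2^ℓ`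
is finite. -/
theorem randomized_mlmc_unbiased
    {Ω : Type*} [MeasurableSpace Ω] (P : Measure Ω) [IsProbabilityMeasure P]
    (Δ : ℕ → Ω → ℝ) (hΔ : ∀ ℓ, MemLp (Δ ℓ) 2 P)
    (c2 β : ℝ) (hc2 : 0 < c2) (hβ : 1 < β)
    (hsq : ∀ ℓ : ℕ, ∫ ω, (Δ ℓ ω) ^ 2 ∂P ≤ c2 * (2 : ℝ) ^ (-β * ℓ))
    (hsummable : Summable fun ℓ : ℕ => |∫ ω, Δ ℓ ω ∂P|)
    (𝓛 : ℝ) (h𝓛 : 𝓛 = ∑' ℓ : ℕ, ∫ ω, Δ ℓ ω ∂P)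
    (ρ : ℝ) (hρ : ρ = (2 : ℝ) ^ (-(β + 1) / 2))
    (w : ℕ → ℝ) (hw : ∀ ℓ, w ℓ = (1 - ρ) * ρ ^ ℓ)
    (ℓstar : Ω → ℕ) (hℓmeas : Measurable ℓstar)
    (hℓlaw : ∀ ℓ : ℕ, P {ω | ℓstar ω = ℓ} = ENNReal.ofReal (w ℓ))
    (hindep : IndepFun ℓstar (fun ω (k : ℕ) => Δ k ω) P)
    (Z : Ω → ℝ) (hZ : ∀ ω, Z ω = Δ (ℓstar ω) ω / w (ℓstar ω)) :
    (Integrable Z P ∧ ∫ ω, Z ω ∂P = 𝓛) ∧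
    (Summable (fun ℓ : ℕ => (∫ ω, (Δ ℓ ω) ^ 2 ∂P) / w ℓ) ∧
      ∫ ω, (Z ω) ^ 2 ∂P = ∑' ℓ : ℕ, (∫ ω, (Δ ℓ ω) ^ 2 ∂P) / w ℓ) ∧
    (Integrable (fun ω => (2 : ℝ) ^ (ℓstar ω)) P ∧
      ∫ ω, (2 : ℝ) ^ (ℓstar ω) ∂P = ∑' ℓ : ℕ, w ℓ * 2 ^ ℓ) := by
  obtain rfl : Z = singleTermEstimator w ℓstar Δ := funext fun ω ↦ (hZ ω).trans (div_eq_inv_mul _ _)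
  obtain ⟨⟨hint, hmean⟩, ⟨-, hsecond⟩, hcost_int, hcost⟩ :=
    randomized_mlmc_unbiased_general P Δ hΔ c2 β (by simpa using hsq) ρ
      (hρ ▸ two_rpow_neg_add_one_div_two_mem_Ioo hβ) w hw ℓstar hℓmeas hℓlaw
      fun ℓ ↦ hindep.comp measurable_id (measurable_pi_apply ℓ)
  simp only [Real.norm_eq_abs, sq_abs] at hsecond
  exact ⟨⟨hint, h𝓛 ▸ hmean.tsum_eq.symm⟩, ⟨hsecond.summable, hsecond.tsum_eq.symm⟩, hcost_int,
    hcost.tsum_eq.symm⟩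
end
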